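/- arXiv:2109.14126 — 4 statements merged into one kernel-verified Lean document; each statement's English description precedes it below -/
import Mathlib

section
/- For every m ≥ 2 and N = 2^m, any two vertices of the Chord graph Chord(N) are joined by a path of length at most m + 1; that is, the graph distance between any two vertices of Chord(N) is at most m + 1. -/
/-!
Let `d < 2^m` be the clockwise distance from `i` to `j`. If `d < 2^(m-1)`, following the fingers
given by the binary digits of `d` reaches `j` in at most `m - 1` hops
(`chordGraph_exists_walk_of_lt`). Otherwise two hops of length `2^(m-2)` replace the missing top
finger and leave a clockwise distance below `2^(m-1)`, for at most `m + 1` hops in total.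
-/

/-- The Chord graph on `N = 2^m` vertices: distinct `i, j` are adjacent iff there is
`k < m - 1` with `j = (i + 2^k) mod N` or `i = (j + 2^k) mod N`. -/
def chordGraph (m : ℕ) : SimpleGraph (Fin (2 ^ m)) :=
  SimpleGraph.fromRel (fun i j => ∃ k < m - 1, (j : ℕ) = ((i : ℕ) + 2 ^ k) % 2 ^ m)

/-- Following one finger prolongs a walk by at most one edge. -/
lemma chordGraph_exists_walk_of_finger {m k l : ℕ} (hk : k < m - 1) {i j v : Fin (2 ^ m)}
    (hv : (v : ℕ) = ((i : ℕ) + 2 ^ k) % 2 ^ m)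
    (h : ∃ p : (chordGraph m).Walk v j, p.length ≤ l) :
    ∃ p : (chordGraph m).Walk i j, p.length ≤ l + 1 := by
  obtain ⟨p, hp⟩ := h
  by_cases hiv : i = v
  · subst hiv
    exact ⟨p, by omega⟩
  · have hadj : (chordGraph m).Adj i v := by
      rw [chordGraph, SimpleGraph.fromRel_adj]
      exact ⟨hiv, Or.inl ⟨k, hk, hv⟩⟩
    exact ⟨.cons hadj p, by simpa using hp⟩

/-- Greedy routing by binary digits: a clockwise distance with at most `n` binary digits, all of
them served by available fingers, is covered in at most `n` hops. -/
lemma chordGraph_exists_walk_of_lt {m : ℕ} (n : ℕ) (hn : n ≤ m - 1) (d : ℕ) (hd : d < 2 ^ n)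
    (i j : Fin (2 ^ m)) (hj : (j : ℕ) = ((i : ℕ) + d) % 2 ^ m) :
    ∃ p : (chordGraph m).Walk i j, p.length ≤ n := by
  induction n generalizing d i with
  | zero =>
    have hd0 : d = 0 := by simpa using hd
    have hij : i = j := by
      ext
      rw [hj, hd0, Nat.add_zero, Nat.mod_eq_of_lt i.isLt]
    subst hij
    exact ⟨.nil, by simp⟩
  | succ n ih =>
    by_cases hlt : d < 2 ^ n
    · obtain ⟨p, hp⟩ := ih (by omega) d hlt i hj
      exact ⟨p, by omega⟩
    · rw [pow_succ] at hd
      -- The leading binary digit of `d` is `2 ^ n`: hop along the `n`-th finger.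
      refine chordGraph_exists_walk_of_finger (k := n) (by omega)
        (v := ⟨((i : ℕ) + 2 ^ n) % 2 ^ m, Nat.mod_lt _ (by positivity)⟩) rfl
        (ih (by omega) (d - 2 ^ n) (by omega) _ ?_)
      simp only [Nat.mod_add_mod]
      rw [hj]
      congr 1
      omega

/-- Any two vertices of `Chord(2^m)` are at graph distance at most `m + 1`. -/
theorem chordGraph_dist_le (m : ℕ) (hm : 2 ≤ m) (i j : Fin (2 ^ m)) :
    (chordGraph m).dist i j ≤ m + 1 := by
  obtain ⟨n, rfl⟩ := Nat.exists_eq_add_of_le' hm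
  -- `d` is the clockwise distance from `i` to `j`.
  obtain ⟨d, hd, hj⟩ : ∃ d < 2 ^ (n + 2), (j : ℕ) = ((i : ℕ) + d) % 2 ^ (n + 2) := by
    have hi := i.isLt
    refine ⟨(2 ^ (n + 2) - i + j) % 2 ^ (n + 2), Nat.mod_lt _ (by positivity), ?_⟩
    rw [Nat.add_mod_mod, ← Nat.add_assoc, Nat.add_sub_cancel' hi.le, Nat.add_mod_left,
      Nat.mod_eq_of_lt j.isLt]
  suffices h : ∃ p : (chordGraph (n + 2)).Walk i j, p.length ≤ n + 2 + 1 by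
    obtain ⟨p, hp⟩ := h
    exact (SimpleGraph.dist_le p).trans hp
  have h1 : 2 ^ (n + 1) = 2 * 2 ^ n := by ring
  have h2 : 2 ^ (n + 2) = 4 * 2 ^ n := by ring
  by_cases hlt : d < 2 ^ (n + 1)
  · obtain ⟨p, hp⟩ := chordGraph_exists_walk_of_lt (n + 1) (by omega) d hlt i j hj
    exact ⟨p, by omega⟩
  · -- Two hops along the finger of length `2 ^ n` replace the missing finger `2 ^ (n + 1)`.
    refine chordGraph_exists_walk_of_finger (k := n) (by omega)
      (v := ⟨((i : ℕ) + 2 ^ n) % 2 ^ (n + 2), Nat.mod_lt _ (by positivity)⟩) rfl ?_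
    refine chordGraph_exists_walk_of_finger (k := n) (by omega)
      (v := ⟨((i : ℕ) + 2 ^ n + 2 ^ n) % 2 ^ (n + 2), Nat.mod_lt _ (by positivity)⟩)
      (by simp only [Nat.mod_add_mod]) ?_
    refine chordGraph_exists_walk_of_lt (n + 1) (by omega) (d - 2 ^ (n + 1)) (by omega) _ _ ?_
    simp only [Nat.mod_add_mod]
    rw [hj]
    congr 1
    omega
end

section
/- For every m ≥ 2 and N = 2^m, the Chord graph Chord(N) remains connected after the deletion of any single vertex; that is, for every vertex v, the subgraph of Chord(N) induced on the remaining N − 1 vertices is connected. -/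
/-- Steps `1 ≤ s < N` along a cycle of length `N` never return to the starting point. -/
lemma add_mod_ne_self_of_lt {N a s : ℕ} (ha : a < N) (hs : 0 < s) (hsN : s < N) :
    (a + s) % N ≠ a := by
  rcases lt_or_ge (a + s) N with h | h
  · rw [Nat.mod_eq_of_lt h]; omega
  · rw [Nat.mod_eq_sub_mod h, Nat.mod_eq_of_lt (by omega)]; omega

lemma exists_add_mod_eq {N a b : ℕ} (ha : a < N) (hb : b < N) (hab : b ≠ a) :
    ∃ t, t + 1 < N ∧ b = (a + (t + 1)) % N := by
  rcases lt_or_ge a b with h | h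
  · refine ⟨b - a - 1, by omega, ?_⟩
    rw [Nat.mod_eq_of_lt (by omega)]; omega
  · refine ⟨b + N - a - 1, by omega, ?_⟩
    rw [Nat.mod_eq_sub_mod (by omega), Nat.mod_eq_of_lt (by omega)]; omega

lemma chordGraph_adj_succ {m : ℕ} (hm : 2 ≤ m) {i j : Fin (2 ^ m)}
    (h : (j : ℕ) = ((i : ℕ) + 1) % 2 ^ m) : (chordGraph m).Adj i j := by
  have hN : 1 < 2 ^ m := Nat.one_lt_two_pow (by omega)
  rw [chordGraph, SimpleGraph.fromRel_adj]
  refine ⟨fun hij => ?_, Or.inl ⟨0, by omega, by simpa using h⟩⟩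
  subst hij
  exact add_mod_ne_self_of_lt i.isLt one_pos hN h.symm

/-- Deleting any single vertex from `Chord(2^m)` leaves a connected graph: the subgraph
induced on the remaining `2^m - 1` vertices is connected. -/
theorem chordGraph_connected_delete_vertex (m : ℕ) (hm : 2 ≤ m) (v : Fin (2 ^ m)) :
    ((chordGraph m).induce {w : Fin (2 ^ m) | w ≠ v}).Connected := by
  have hN : 1 < 2 ^ m := Nat.one_lt_two_pow (by omega)
  -- `p t` is the vertex `v + (t + 1)` of the path.
  let p (t : ℕ) (ht : t + 1 < 2 ^ m) : {w : Fin (2 ^ m) | w ≠ v} :=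
    ⟨⟨((v : ℕ) + (t + 1)) % 2 ^ m, Nat.mod_lt _ (by omega)⟩, fun h =>
      add_mod_ne_self_of_lt v.isLt t.succ_pos ht (congrArg Fin.val h)⟩
  have hp : ∀ t ht, ((chordGraph m).induce {w : Fin (2 ^ m) | w ≠ v}).Reachable
      (p 0 (by omega)) (p t ht) := by
    intro t
    induction t with
    | zero => intro _; exact SimpleGraph.Reachable.refl _
    | succ t ih =>
      intro ht
      refine (ih (by omega)).trans (SimpleGraph.Adj.reachable ?_)
      rw [SimpleGraph.induce_adj]
      exact chordGraph_adj_succ hm (by simp [p, Nat.mod_add_mod, add_assoc])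
  rw [SimpleGraph.connected_iff_exists_forall_reachable]
  refine ⟨p 0 (by omega), fun ⟨w, hw⟩ => ?_⟩
  obtain ⟨t, ht, hwt⟩ := exists_add_mod_eq v.isLt w.isLt (fun h => hw (Fin.ext h))
  have : (⟨w, hw⟩ : {w : Fin (2 ^ m) | w ≠ v}) = p t ht := Subtype.ext (Fin.ext hwt)
  rw [this]
  exact hp t ht
end

section
/- Let N ∈ ℕ and let V be a nonempty finite subset of {0,…,N−1}. Then the host function is well-defined on {0,…,N−1}, its fibers partition {0,…,N−1}, and they are exactly the responsible ranges: host⁻¹(min V) = [0, succ(min V)) when |V| ≥ 2 (and host⁻¹(min V) = [0,N) when V is a singleton), host⁻¹(max V) = [max V, N) when |V| ≥ 2, and host⁻¹(u) = [u, succ(u)) for every u ∈ V with min V < u < max V. In particular, every guest identifier b ∈ {0,…,N−1} has exactly one host. -/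
/-! Both `hostOf` and `succOf` are determined by order properties: the host of `b` is either
the greatest element of `V` that is `≤ b`, or `min V` when all of `V` exceeds `b`
(`hostOf_spec`), and `succOf V u` is the least element of `V` above `u` whenever there is one
(`succOf_spec`). Hence for `u ∈ V` with `u ≤ b`, the host of `b` is `u` exactly when no element
of `V` lies in `(u, b]`, that is, when `b < succOf V u`; the fibers follow by comparing these
bounds. -/

/-- The host of guest identifier `b`: the largest element `u ∈ V` with `u ≤ b` if such an
element exists, and `min V` otherwise. -/
noncomputable def hostOf (V : Finset ℕ) (hV : V.Nonempty) (b : ℕ) : ℕ :=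
  if h : (V.filter (fun u => u ≤ b)).Nonempty then (V.filter (fun u => u ≤ b)).max' h
  else V.min' hV

/-- The successor of `u` in `V`: the least element of `V` greater than `u` (junk value `0`
if no such element exists, e.g. for `u = max V`). -/
noncomputable def succOf (V : Finset ℕ) (u : ℕ) : ℕ :=
  if h : (V.filter (fun v => u < v)).Nonempty then (V.filter (fun v => u < v)).min' h else 0

theorem hostOf_spec (V : Finset ℕ) (hV : V.Nonempty) (b : ℕ) :
    hostOf V hV b ∈ V ∧
    ((hostOf V hV b ≤ b ∧ ∀ v ∈ V, v ≤ b → v ≤ hostOf V hV b) ∨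
      (hostOf V hV b = V.min' hV ∧ ∀ v ∈ V, b < v)) := by
  unfold hostOf
  split_ifs with h
  · have hm := Finset.mem_filter.mp (Finset.max'_mem _ h)
    exact ⟨hm.1, Or.inl ⟨hm.2, fun v hv hvb =>
      Finset.le_max' _ v (Finset.mem_filter.mpr ⟨hv, hvb⟩)⟩⟩
  · refine ⟨Finset.min'_mem _ _, Or.inr ⟨rfl, fun v hv => ?_⟩⟩
    by_contra hvb
    exact h ⟨v, Finset.mem_filter.mpr ⟨hv, not_lt.mp hvb⟩⟩

theorem succOf_spec (V : Finset ℕ) (u w : ℕ) (hw : w ∈ V) (huw : u < w) :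
    succOf V u ∈ V ∧ u < succOf V u ∧ ∀ v ∈ V, u < v → succOf V u ≤ v := by
  have h : (V.filter (fun v => u < v)).Nonempty := ⟨w, Finset.mem_filter.mpr ⟨hw, huw⟩⟩
  have hm := Finset.mem_filter.mp (Finset.min'_mem _ h)
  rw [succOf, dif_pos h]
  exact ⟨hm.1, hm.2, fun v hv huv => Finset.min'_le _ v (Finset.mem_filter.mpr ⟨hv, huv⟩)⟩

/-- The host function is well-defined on `{0, …, N-1}`, and its fibers are exactly the
responsible ranges: `[0, succ (min V))` for `min V` (all of `[0, N)` if `V` is a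
singleton), `[max V, N)` for `max V`, and `[u, succ u)` for intermediate hosts `u`.
In particular every guest identifier has exactly one host. -/
theorem hostOf_fibers (N : ℕ) (V : Finset ℕ) (hV : V.Nonempty) (hVN : ∀ u ∈ V, u < N) :
    (∀ b < N, hostOf V hV b ∈ V) ∧
    (1 < V.card → ∀ b < N, (hostOf V hV b = V.min' hV ↔ b < succOf V (V.min' hV))) ∧
    (V.card = 1 → ∀ b < N, hostOf V hV b = V.min' hV) ∧
    (1 < V.card → ∀ b < N, (hostOf V hV b = V.max' hV ↔ V.max' hV ≤ b)) ∧
    (∀ u ∈ V, V.min' hV < u → u < V.max' hV →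
      ∀ b < N, (hostOf V hV b = u ↔ u ≤ b ∧ b < succOf V u)) ∧
    (∀ b < N, ∃! u, u ∈ V ∧ hostOf V hV b = u) := by
  have hmin : ∀ v ∈ V, V.min' hV ≤ v := fun v hv => Finset.min'_le _ v hv
  have hmax : ∀ v ∈ V, v ≤ V.max' hV := fun v hv => Finset.le_max' _ v hv
  have hminV := Finset.min'_mem V hV
  have hmaxV := Finset.max'_mem V hV
  have hlt : 1 < V.card → V.min' hV < V.max' hV := Finset.min'_lt_max'_of_card V
  refine ⟨fun b _ => (hostOf_spec V hV b).1, fun hc b _ => ?_, fun hc b _ => ?_,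
    fun hc b _ => ?_, fun u hu _ hu2 b _ => ?_,
    fun b _ => ⟨_, ⟨(hostOf_spec V hV b).1, rfl⟩, fun _ h => h.2.symm⟩⟩
  · obtain ⟨hH, h⟩ := hostOf_spec V hV b
    obtain ⟨hS, hlS, hleS⟩ := succOf_spec V _ _ hmaxV (hlt hc)
    have h1 := hmin _ hH
    have h2 := hleS _ hH
    rcases h with ⟨h3, h4⟩ | ⟨h3, h4⟩
    · have h5 := h4 _ hS
      omega
    · have h5 := h4 _ hS
      omega
  · exact Finset.card_le_one.mp hc.le _ (hostOf_spec V hV b).1 _ hminV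
  · obtain ⟨hH, h⟩ := hostOf_spec V hV b
    have h1 := hmax _ hH
    have h2 := hlt hc
    rcases h with ⟨h3, h4⟩ | ⟨h3, h4⟩
    · have h5 := h4 _ hmaxV
      omega
    · have h5 := h4 _ hmaxV
      omega
  · obtain ⟨hH, h⟩ := hostOf_spec V hV b
    obtain ⟨hS, hlS, hleS⟩ := succOf_spec V u _ hmaxV hu2
    have h2 := hleS _ hH
    rcases h with ⟨h3, h4⟩ | ⟨h3, h4⟩
    · have h5 := h4 _ hS
      have h6 := h4 _ hu
      omega
    · have h5 := h4 _ hu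
      omega
end

section
/- Let N ∈ ℕ and let V be a nonempty finite subset of {0,…,N−1}. For every guest identifier b with b + 1 ≤ N − 1, either host(b + 1) = host(b), or host(b) ≠ max V and host(b + 1) = succ(host(b)). That is, the 0-th finger b + 1 of a guest node b ≠ N − 1 is hosted either by the same host as b or by the successor of that host. -/
/-- Passing from `b` to `b + 1` can change the host only when `b + 1` is itself a host. -/
theorem hostOf_succ_of_notMem (V : Finset ℕ) (hV : V.Nonempty) (b : ℕ) (hbV : b + 1 ∉ V) :
    hostOf V hV (b + 1) = hostOf V hV b := by
  have hfilter : V.filter (fun u => u ≤ b + 1) = V.filter (fun u => u ≤ b) := by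
    ext u
    simp only [Finset.mem_filter, and_congr_right_iff]
    intro hu
    have : u ≠ b + 1 := fun h => hbV (h ▸ hu)
    omega
  simp only [hostOf, hfilter]

theorem hostOf_of_mem (V : Finset ℕ) (hV : V.Nonempty) (c : ℕ) (hc : c ∈ V) :
    hostOf V hV c = c := by
  have hmem : c ∈ V.filter (fun u => u ≤ c) := by simp [hc]
  rw [hostOf, dif_pos ⟨c, hmem⟩]
  exact le_antisymm (Finset.max'_le _ _ _ fun u hu => (Finset.mem_filter.1 hu).2)
    (Finset.le_max' _ _ hmem)

/-- The 0-th finger `b + 1` of a guest node `b ≠ N - 1` is hosted either by the same host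
as `b` or by the successor of that host. -/
theorem hostOf_succ_finger (N : ℕ) (V : Finset ℕ) (hV : V.Nonempty) (hVN : ∀ u ∈ V, u < N)
    (b : ℕ) (hb : b + 1 ≤ N - 1) :
    hostOf V hV (b + 1) = hostOf V hV b ∨
      (hostOf V hV b ≠ V.max' hV ∧ hostOf V hV (b + 1) = succOf V (hostOf V hV b)) := by
  by_cases hbV : b + 1 ∈ V
  swap
  · exact Or.inl (hostOf_succ_of_notMem V hV b hbV)
  rw [hostOf_of_mem V hV (b + 1) hbV]
  by_cases h : (V.filter (fun u => u ≤ b)).Nonempty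
  · right
    have hhost : hostOf V hV b = (V.filter (fun u => u ≤ b)).max' h := dif_pos h
    have hle : hostOf V hV b ≤ b := by
      rw [hhost]
      exact (Finset.mem_filter.1 (Finset.max'_mem _ h)).2
    have hub : ∀ u ∈ V, u ≤ b → u ≤ hostOf V hV b := by
      intro u hu hub
      rw [hhost]
      exact Finset.le_max' _ _ (Finset.mem_filter.2 ⟨hu, hub⟩)
    have hmem : b + 1 ∈ V.filter (fun v => hostOf V hV b < v) :=
      Finset.mem_filter.2 ⟨hbV, by omega⟩
    refine ⟨?_, ?_⟩
    · have := V.le_max' (b + 1) hbV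
      omega
    · rw [succOf, dif_pos ⟨_, hmem⟩]
      refine le_antisymm (Finset.le_min' _ _ _ fun v hv => ?_) (Finset.min'_le _ _ hmem)
      obtain ⟨hvV, hlt⟩ := Finset.mem_filter.1 hv
      by_contra hcon
      have := hub v hvV (by omega)
      omega
  · left
    rw [hostOf, dif_neg h]
    refine le_antisymm (Finset.le_min' _ _ _ fun v hv => ?_) (Finset.min'_le _ _ hbV)
    by_contra hcon
    exact h ⟨v, Finset.mem_filter.2 ⟨hv, by omega⟩⟩
end
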